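/- arXiv:1503.05931 — 2 statements merged into one kernel-verified Lean document; each statement's English description precedes it below -/
import Mathlib

section
/- Let X be a compact, connected, locally connected metric space and let x ∈ X. Then every connected component C of X ∖ {x} is open in X and is arcwise connected. -/
open Function Set Topology

/-- `x` and `y` are joined by an arc (a continuous injective path) lying in `S`. -/
def JoinedByArcIn {X : Type*} [TopologicalSpace X] (S : Set X) (x y : X) : Prop :=
  ∃ γ : unitInterval → X, Continuous γ ∧ Function.Injective γ ∧
    γ 0 = x ∧ γ 1 = y ∧ Set.range γ ⊆ S

open Filter in
theorem arc_of_monotone {X : Type*} [MetricSpace X] (g : ℝ → X) (hg : Continuous g)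
    (hm : ∀ s t u, s ≤ u → u ≤ t → g s = g t → g u = g s) (h01 : g 0 ≠ g 1) :
    ∃ γ : unitInterval → X, Continuous γ ∧ Function.Injective γ ∧ γ 0 = g 0 ∧ γ 1 = g 1 ∧
      Set.range γ ⊆ Set.range g := by
  let F : ℝ → ℝ → ℝ → ℝ := fun q t u => min 1 (dist (g q) (g (q + u * max (t - q) 0)))
  let p : ℝ → ℝ → ℝ := fun q t => sSup (F q t '' Icc (0:ℝ) 1)
  have hbdd : ∀ q t, BddAbove (F q t '' Icc (0:ℝ) 1) := by
    intro q t
    refine ⟨1, ?_⟩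
    rintro _ ⟨u, -, rfl⟩
    exact min_le_left _ _
  have hne : ∀ q t, (F q t '' Icc (0:ℝ) 1).Nonempty := fun q t => ⟨_, 0, by simp, rfl⟩
  have pcont : ∀ q, Continuous (p q) := by
    intro q
    apply IsCompact.continuous_sSup isCompact_Icc
    simp only [F, Function.HasUncurry.uncurry]
    fun_prop
  have p0 : ∀ q t, 0 ≤ p q t := by
    intro q t
    exact le_csSup_of_le (hbdd q t) ⟨0, by simp, rfl⟩ (le_min zero_le_one dist_nonneg)
  have p1 : ∀ q t, p q t ≤ 1 := by
    intro q t
    apply csSup_le (hne q t)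
    rintro _ ⟨u, -, rfl⟩
    exact min_le_left _ _
  have ple : ∀ q t w, q ≤ w → w ≤ t → min 1 (dist (g q) (g w)) ≤ p q t := by
    intro q t w h1 h2
    rcases h1.eq_or_lt with rfl | h1
    · simpa using p0 q t
    apply le_csSup (hbdd q t)
    have : 0 < t - q := by linarith
    refine ⟨(w - q) / (t - q), ⟨by apply div_nonneg <;> linarith, by
      rw [div_le_one this]; linarith⟩, ?_⟩
    simp only [F]
    rw [max_eq_left this.le, div_mul_cancel₀ _ this.ne']
    simp
  have pub : ∀ q t c, q ≤ t → (∀ w, q ≤ w → w ≤ t → min 1 (dist (g q) (g w)) ≤ c) → p q t ≤ c := by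
    intro q t c h0 h
    apply csSup_le (hne q t)
    rintro _ ⟨u, ⟨hu0, hu1⟩, rfl⟩
    simp only [F]
    rw [max_eq_left (by linarith)]
    apply h <;> nlinarith
  have pz : ∀ q t, t ≤ q → p q t = 0 := by
    intro q t h
    apply le_antisymm _ (p0 q t)
    apply csSup_le (hne q t)
    rintro _ ⟨u, ⟨hu0, hu1⟩, rfl⟩
    simp [F, max_eq_right (show t - q ≤ 0 by linarith)]
  have pmono : ∀ q s t, s ≤ t → p q s ≤ p q t := by
    intro q s t h
    rcases le_total s q with hs | hs
    · rw [pz q s hs]; exact p0 _ _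
    · exact pub _ _ _ hs fun w h1 h2 => ple _ _ _ h1 (h2.trans h)
  let d := TopologicalSpace.denseSeq ℝ
  let T : ℕ → ℝ → ℝ := fun n t => (1/2:ℝ)^n * p (d n) t
  have Tb : ∀ n t, ‖T n t‖ ≤ (1/2:ℝ)^n := by
    intro n t
    have := p0 (d n) t
    have := p1 (d n) t
    rw [Real.norm_of_nonneg (by positivity)]
    have : 0 ≤ (1/2:ℝ)^n := by positivity
    simp only [T]
    nlinarith
  have Ts : ∀ t, Summable fun n => T n t := fun t =>
    Summable.of_norm_bounded summable_geometric_two (fun n => Tb n t)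
  let φ : ℝ → ℝ := fun t => ∑' n, T n t
  have φc : Continuous φ := by
    apply continuous_tsum (fun n => ?_) summable_geometric_two Tb
    exact continuous_const.mul (pcont _)
  have Tm : ∀ n s t, s ≤ t → T n s ≤ T n t := fun n s t h =>
    mul_le_mul_of_nonneg_left (pmono _ _ _ h) (by positivity)
  have φm : Monotone φ := fun s t h => (Ts s).tsum_le_tsum (fun n => Tm n s t h) (Ts t)
  have φlt : ∀ s t, s < t → g s ≠ g t → φ s < φ t := by
    intro s t h hne
    have hex : ∃ q ∈ Set.range d, q ∈ Ioo s t ∩ {q | g q ≠ g t} := by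
      have hopen : IsOpen {q | g q ≠ g t} := isOpen_ne_fun hg continuous_const
      have h1 : ∀ᶠ q in 𝓝[>] s, q ∈ Ioo s t ∩ {q | g q ≠ g t} :=
        Filter.inter_mem (Ioo_mem_nhdsGT h) (mem_nhdsWithin_of_mem_nhds (hopen.mem_nhds hne))
      obtain ⟨q, hq, hq'⟩ := (TopologicalSpace.denseRange_denseSeq ℝ).exists_mem_open
        (isOpen_Ioo.inter hopen) h1.exists
      exact ⟨_, ⟨q, rfl⟩, hq, hq'⟩
    obtain ⟨_, ⟨n, rfl⟩, ⟨hn1, hn2⟩, hn3⟩ := hex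
    refine (Ts s).tsum_lt_tsum (i := n) (fun n => Tm n s t h.le) ?_ (Ts t)
    refine mul_lt_mul_of_pos_left ?_ (by positivity)
    rw [pz _ _ hn1.le]
    refine lt_of_lt_of_le ?_ (ple (d n) t t hn2.le le_rfl)
    exact lt_min one_pos (dist_pos.2 hn3)
  have φeq' : ∀ s t, s ≤ t → g s = g t → φ s = φ t := by
    intro s t h he
    apply le_antisymm (φm h)
    refine (Ts t).tsum_le_tsum (fun n => mul_le_mul_of_nonneg_left ?_ (by positivity)) (Ts s)
    rcases le_total t (d n) with h1 | h1
    · rw [pz _ _ h1]; exact p0 _ _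
    apply pub _ _ _ h1
    intro w hw1 hw2
    rcases le_total w s with h2 | h2
    · exact ple _ _ _ hw1 h2
    · rw [hm s t w h2 hw2 he]
      rcases le_total (d n) s with h3 | h3
      · exact ple _ _ _ h3 le_rfl
      · rw [hm s t (d n) h3 h1 he]; simpa using p0 _ _
  have φiff : ∀ s t, φ s = φ t ↔ g s = g t := by
    intro s t
    constructor
    · intro h
      by_contra hne
      rcases lt_trichotomy s t with h1 | h1 | h1
      · exact (φlt s t h1 hne).ne h
      · exact hne (by rw [h1])
      · exact (φlt t s h1 (Ne.symm hne)).ne h.symm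
    · intro h
      rcases le_total s t with h1 | h1
      · exact φeq' s t h1 h
      · exact (φeq' t s h1 h.symm).symm
  have hpos : 0 < φ 1 - φ 0 := sub_pos.2 (φlt 0 1 one_pos h01)
  let ψ : unitInterval → unitInterval := fun t => ⟨(φ t - φ 0) / (φ 1 - φ 0),
    div_nonneg (sub_nonneg.2 (φm t.2.1)) hpos.le,
    (div_le_one hpos).2 (sub_le_sub_right (φm t.2.2) _)⟩
  have ψc : Continuous ψ := by
    apply Continuous.subtype_mk
    have : Continuous fun t : unitInterval => φ t := φc.comp continuous_subtype_val
    fun_prop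
  have ψ0 : ψ 0 = 0 := by ext; simp [ψ]
  have ψ1 : ψ 1 = 1 := by ext; simp [ψ, hpos.ne']
  have ψs : Function.Surjective ψ := by
    intro v
    have h := intermediate_value_univ (0 : unitInterval) 1 ψc
    rw [ψ0, ψ1] at h
    exact h ⟨v.2.1, v.2.2⟩
  have ψiff : ∀ s t, ψ s = ψ t ↔ g s = g t := by
    intro s t
    rw [← φiff, Subtype.ext_iff]
    simp only [ψ]
    rw [div_left_inj' hpos.ne', sub_left_inj]
  have hq : IsQuotientMap ψ := IsQuotientMap.of_surjective_continuous ψs ψc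
  choose τ hτ using ψs
  have key : ∀ t, g (τ (ψ t)) = g t := fun t => (ψiff _ _).1 (hτ _)
  refine ⟨fun v => g (τ v), ?_, ?_, ?_, ?_, ?_⟩
  · rw [hq.continuous_iff]
    have : (fun v => g (τ v)) ∘ ψ = fun t : unitInterval => g t := by
      ext t; exact key t
    rw [this]
    exact hg.comp continuous_subtype_val
  · intro v w h
    have := (ψiff _ _).2 h
    rwa [hτ, hτ] at this
  · have := key 0
    rw [ψ0] at this
    simpa using this
  · have := key 1
    rw [ψ1] at this
    simpa using this
  · rintro _ ⟨v, rfl⟩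
    exact ⟨_, rfl⟩

/-- Closed sets of times in the unit interval all of whose gaps are closed up by `f`. -/
def GapSets {X : Type*} (f : ℝ → X) : Set (Set ℝ) :=
  {A | IsClosed A ∧ A ⊆ Icc 0 1 ∧ (0:ℝ) ∈ A ∧ (1:ℝ) ∈ A ∧
    ∀ s ∈ A, ∀ t ∈ A, s < t → (∀ u ∈ A, ¬ (s < u ∧ u < t)) → f s = f t}

theorem exists_minimal_gapSet {X : Type*} [MetricSpace X] (f : ℝ → X) (hf : Continuous f) :
    ∃ A, Minimal (· ∈ GapSets f) A := by
  have h0 : Icc (0:ℝ) 1 ∈ GapSets f := by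
    refine ⟨isClosed_Icc, subset_rfl, by simp, by simp, ?_⟩
    intro s hs t ht hst h
    exact absurd ⟨by linarith, by linarith⟩ (h ((s+t)/2) ⟨by linarith [hs.1, ht.1], by linarith [hs.2, ht.2]⟩)
  suffices H : ∀ c ⊆ GapSets f, IsChain (· ⊆ ·) c → c.Nonempty →
      ∃ lb ∈ GapSets f, ∀ s ∈ c, lb ⊆ s by
    obtain ⟨m, -, hm⟩ := zorn_superset_nonempty (GapSets f) H _ h0
    exact ⟨m, hm⟩
  intro c hc hchain hcne
  refine ⟨⋂₀ c, ⟨isClosed_sInter fun A hA => (hc hA).1, ?_, fun A hA => (hc hA).2.2.1,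
    fun A hA => (hc hA).2.2.2.1, ?_⟩, fun s hs => sInter_subset_of_mem hs⟩
  · obtain ⟨A, hA⟩ := hcne
    exact (sInter_subset_of_mem hA).trans (hc hA).2.1
  intro s hs t ht hst hgap
  by_contra hne
  -- small one-sided neighbourhoods on which `f` takes separated values
  obtain ⟨U, V, hU, hV, hsU, htV, hUV⟩ := t2_separation hne
  obtain ⟨δ, hδ, hδU⟩ := Metric.isOpen_iff.1 (hU.preimage hf) s hsU
  obtain ⟨η, hη, hηV⟩ := Metric.isOpen_iff.1 (hV.preimage hf) t htV
  set e := min (min (δ/2) (η/2)) ((t - s)/3) with he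
  have e1 : e ≤ δ/2 := (min_le_left _ _).trans (min_le_left _ _)
  have e2 : e ≤ η/2 := (min_le_left _ _).trans (min_le_right _ _)
  have e3 : e ≤ (t-s)/3 := min_le_right _ _
  have e0 : 0 < e := lt_min (lt_min (by linarith) (by linarith)) (by linarith)
  have hA : ∃ A ∈ c, A ∩ Icc (s+e) (t-e) = ∅ := by
    by_contra hcon
    push Not at hcon
    haveI : Nonempty c := hcne.to_subtype
    have := IsCompact.nonempty_iInter_of_directed_nonempty_isCompact_isClosed
      (fun A : c => A.1 ∩ Icc (s+e) (t-e)) ?_ (fun A => hcon A.1 A.2)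
      (fun A => isCompact_Icc.inter_left (hc A.2).1) (fun A => (hc A.2).1.inter isClosed_Icc)
    · obtain ⟨u, hu⟩ := this
      rw [mem_iInter] at hu
      have hu2 := (hu (Classical.arbitrary c)).2
      exact hgap u (fun A hA => (hu ⟨A, hA⟩).1) ⟨by linarith [hu2.1], by linarith [hu2.2]⟩
    · intro A B
      rcases hchain.total A.2 B.2 with h | h
      · exact ⟨A, subset_rfl, inter_subset_inter_left _ h⟩
      · exact ⟨B, inter_subset_inter_left _ h, subset_rfl⟩
  obtain ⟨A, hAc, hAe⟩ := hA
  obtain ⟨hAcl, -, -, -, hAg⟩ := hc hAc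
  obtain ⟨u, hu, hu'⟩ := (isCompact_Icc.inter_left hAcl : IsCompact (A ∩ Icc s (s+e))).exists_isGreatest
    ⟨s, hs A hAc, le_rfl, by linarith⟩
  obtain ⟨v, hv, hv'⟩ := (isCompact_Icc.inter_left hAcl : IsCompact (A ∩ Icc (t-e) t)).exists_isLeast
    ⟨t, ht A hAc, by linarith, le_rfl⟩
  have huv : f u = f v := by
    apply hAg u hu.1 v hv.1 (by linarith [hu.2.2, hv.2.1])
    rintro w hw ⟨h1, h2⟩
    rcases le_total w (s+e) with h3 | h3
    · linarith [hu' ⟨hw, by linarith [hu.2.1], h3⟩]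
    rcases le_total (t-e) w with h4 | h4
    · linarith [hv' ⟨hw, h4, by linarith [hv.2.2]⟩]
    · have : w ∈ A ∩ Icc (s+e) (t-e) := ⟨hw, h3, h4⟩
      rw [hAe] at this
      exact this
  have h1 : f u ∈ U := hδU (by rw [Metric.mem_ball, Real.dist_eq, abs_lt]; constructor <;> linarith [hu.2.1, hu.2.2])
  have h2 : f v ∈ V := hηV (by rw [Metric.mem_ball, Real.dist_eq, abs_lt]; constructor <;> linarith [hv.2.1, hv.2.2])
  exact Set.disjoint_left.1 hUV h1 (huv ▸ h2)

theorem exists_monotone_path {X : Type*} [MetricSpace X] (f : ℝ → X) (hf : Continuous f) :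
    ∃ g : ℝ → X, Continuous g ∧ (∀ s t u, s ≤ u → u ≤ t → g s = g t → g u = g s) ∧
      g 0 = f 0 ∧ g 1 = f 1 ∧ range g ⊆ range f := by
  obtain ⟨A, hA⟩ := exists_minimal_gapSet f hf
  obtain ⟨hcl, hsub, h0, h1, hgap⟩ := hA.prop
  have hinj : ∀ s ∈ A, ∀ t ∈ A, s < t → f s = f t → ∀ u ∈ A, ¬ (s < u ∧ u < t) := by
    intro s hs t ht hst he u hu hsu
    have hB : A \ Ioo s t ∈ GapSets f := by
      refine ⟨hcl.sdiff isOpen_Ioo, sdiff_subset.trans hsub, ⟨h0, ?_⟩, ⟨h1, ?_⟩, ?_⟩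
      · exact fun h => absurd (hsub hs).1 (not_le.2 h.1)
      · exact fun h => absurd (hsub ht).2 (not_le.2 h.2)
      rintro a ⟨ha, ha'⟩ b ⟨hb, hb'⟩ hab hg
      by_cases hcase : a ≤ s ∧ t ≤ b
      · have ea : a = s := by
          by_contra hne
          exact hg s ⟨hs, fun h => lt_irrefl _ h.1⟩ ⟨lt_of_le_of_ne hcase.1 hne, by linarith⟩
        have eb : t = b := by
          by_contra hne
          exact hg t ⟨ht, fun h => lt_irrefl _ h.2⟩ ⟨by linarith, lt_of_le_of_ne hcase.2 hne⟩
        rw [ea, ← eb, he]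
      · apply hgap a ha b hb hab
        rintro w hw hw'
        refine hg w ⟨hw, fun hwI => hcase ⟨?_, ?_⟩⟩ hw'
        · by_contra h
          exact ha' ⟨not_le.1 h, by linarith [hwI.2]⟩
        · by_contra h
          exact hb' ⟨by linarith [hwI.1], not_le.1 h⟩
    exact (hA.le_of_le hB sdiff_subset hu).2 hsu
  have hr : ∀ t : ℝ, 0 ≤ t → ∃ a, IsGreatest (A ∩ Icc 0 t) a := fun t ht =>
    (isCompact_Icc.inter_left hcl : IsCompact (A ∩ Icc 0 t)).exists_isGreatest ⟨0, h0, le_rfl, ht⟩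
  let cl : ℝ → ℝ := fun t => max 0 (min 1 t)
  have cl0 : ∀ t, 0 ≤ cl t := fun t => le_max_left _ _
  have cl1 : ∀ t, cl t ≤ 1 := fun t => max_le zero_le_one (min_le_left _ _)
  have clm : ∀ s t, s ≤ t → cl s ≤ cl t := fun s t h => max_le_max le_rfl (min_le_min le_rfl h)
  have clc : Continuous cl := by fun_prop
  have hr' : ∀ t : ℝ, ∃ a, IsGreatest (A ∩ Icc 0 (cl t)) a := fun t => hr _ (cl0 t)
  choose r hr using hr'
  have rA : ∀ t, r t ∈ A := fun t => (hr t).1.1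
  have rle : ∀ t, r t ≤ cl t := fun t => (hr t).1.2.2
  have rge : ∀ t, ∀ a ∈ A, a ≤ cl t → a ≤ r t := fun t a ha h => (hr t).2 ⟨ha, (hsub ha).1, h⟩
  have rm : ∀ s t, s ≤ t → r s ≤ r t := fun s t h => rge t _ (rA s) ((rle s).trans (clm s t h))
  -- the value at `s` is also the value at the next point of `A`
  have hnext : ∀ s, ∃ a ∈ A, cl s ≤ a ∧ f a = f (r s) ∧ ∀ b ∈ A, cl s ≤ b → a ≤ b := by
    intro s
    obtain ⟨a, ha, ha'⟩ := (isCompact_Icc.inter_left hcl :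
      IsCompact (A ∩ Icc (cl s) 1)).exists_isLeast ⟨1, h1, cl1 s, le_rfl⟩
    refine ⟨a, ha.1, ha.2.1, ?_, fun b hb hb' => ha' ⟨hb, hb', (hsub hb).2⟩⟩
    rcases ((rle s).trans ha.2.1).eq_or_lt with h | h
    · rw [h]
    · symm
      apply hgap _ (rA s) _ ha.1 h
      rintro u hu ⟨hu1, hu2⟩
      rcases le_total u (cl s) with h3 | h3
      · exact absurd (rge s u hu h3) (not_le.2 hu1)
      · exact absurd (ha' ⟨hu, h3, (hsub hu).2⟩) (not_le.2 hu2)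
  have hdist : ∀ s t, s ≤ t → ∃ a ∈ Icc (cl s) (cl t), ∃ b ∈ Icc (cl s) (cl t), dist (f (r s)) (f (r t)) = dist (f a) (f b) := by
    intro s t hst
    rcases lt_or_ge (r t) (cl s) with h | h
    · have : r t = r s := le_antisymm (rge s _ (rA t) h.le) (rm s t hst)
      exact ⟨cl s, ⟨le_rfl, clm s t hst⟩, cl s, ⟨le_rfl, clm s t hst⟩, by rw [this]; simp⟩
    · obtain ⟨a, ha, hsa, hfa, hmin⟩ := hnext s
      exact ⟨a, ⟨hsa, (hmin _ (rA t) h).trans (rle t)⟩, r t, ⟨h, rle t⟩, by rw [hfa]⟩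
  have huc : UniformContinuousOn f (Icc 0 1) :=
    isCompact_Icc.uniformContinuousOn_of_continuous hf.continuousOn
  refine ⟨fun t => f (r t), ?_, ?_, ?_, ?_, ?_⟩
  · rw [Metric.continuous_iff]
    intro b ε hε
    obtain ⟨δ, hδ, H⟩ := Metric.uniformContinuousOn_iff.1 huc ε hε
    obtain ⟨η, hη, K⟩ := Metric.continuous_iff.1 clc b δ hδ
    refine ⟨η, hη, fun a ha => ?_⟩
    have hK := K a ha
    rw [Real.dist_eq, abs_lt] at hK
    have main : ∀ s t, s ≤ t → cl t - cl s < δ → dist (f (r s)) (f (r t)) < ε := by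
      intro s t hst hlt
      obtain ⟨x, hx, y, hy, hxy⟩ := hdist s t hst
      rw [hxy]
      apply H x ⟨(cl0 s).trans hx.1, hx.2.trans (cl1 t)⟩ y ⟨(cl0 s).trans hy.1, hy.2.trans (cl1 t)⟩
      rw [Real.dist_eq, abs_lt]
      constructor <;> linarith [hx.1, hx.2, hy.1, hy.2]
    rcases le_total a b with h | h
    · exact main a b h (by linarith)
    · rw [dist_comm]; exact main b a h (by linarith)
  · intro s t u hsu hut he
    have h1 := rm s u hsu
    have h2 := rm u t hut
    rcases h1.eq_or_lt with h1 | h1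
    · simp only [h1]
    rcases h2.eq_or_lt with h2 | h2
    · simp only [h2, he]
    exact absurd ⟨h1, h2⟩ (hinj _ (rA s) _ (rA t) (h1.trans h2) he _ (rA u))
  · have : r 0 = 0 := le_antisymm (by simpa [cl] using rle 0) (hr 0).1.2.1
    simp only [this]
  · have : r 1 = 1 := le_antisymm ((rle 1).trans (cl1 1)) (rge 1 1 h1 (by simp [cl]))
    simp only [this]
  · rintro _ ⟨t, rfl⟩
    exact ⟨_, rfl⟩

theorem exists_small_chain {X : Type*} [MetricSpace X] [LocallyConnectedSpace X] (W : Set X)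
    (hW : IsOpen W) (hWc : IsPreconnected W) (ε : ℝ) (hε : 0 < ε) (p q : X) (hp : p ∈ W)
    (hq : q ∈ W) :
    ∃ (M : ℕ) (P : ℕ → X) (V : ℕ → Set X), P 0 = p ∧ (∀ j, M ≤ j → P j = q) ∧
      ∀ j, IsOpen (V j) ∧ IsPreconnected (V j) ∧ V j ⊆ W ∧ P j ∈ V j ∧ P (j+1) ∈ V j ∧
        ∀ x ∈ V j, ∀ y ∈ V j, dist x y < ε := by
  let R : X → X → Prop := fun u v => ∃ V : Set X, IsOpen V ∧ IsPreconnected V ∧ V ⊆ W ∧ u ∈ V ∧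
    v ∈ V ∧ ∀ x ∈ V, ∀ y ∈ V, dist x y < ε
  have hloc : ∀ x ∈ W, ∃ V : Set X, IsOpen V ∧ IsPreconnected V ∧ V ⊆ W ∧ x ∈ V ∧
      ∀ x ∈ V, ∀ y ∈ V, dist x y < ε := by
    intro x hx
    obtain ⟨V, hV, hVo, hxV, hVc⟩ := locallyConnectedSpace_iff_subsets_isOpen_isConnected.1
      inferInstance x (W ∩ Metric.ball x (ε/2))
      (Filter.inter_mem (hW.mem_nhds hx) (Metric.ball_mem_nhds x (by linarith)))
    refine ⟨V, hVo, hVc.isPreconnected, fun y hy => (hV hy).1, hxV, fun y hy z hz => ?_⟩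
    have h1 := (hV hy).2
    have h2 := (hV hz).2
    rw [Metric.mem_ball] at h1 h2
    linarith [dist_triangle_right y z x]
  have hR : Relation.ReflTransGen R p q := by
    refine hWc.induction₂' (Relation.ReflTransGen R) ?_ (fun x y z _ _ _ h1 h2 => h1.trans h2) hp hq
    intro x hx
    obtain ⟨V, hVo, hVc, hVW, hxV, hVd⟩ := hloc x hx
    filter_upwards [mem_nhdsWithin_of_mem_nhds (hVo.mem_nhds hxV)] with y hy
    exact ⟨.single ⟨V, hVo, hVc, hVW, hxV, hy, hVd⟩, .single ⟨V, hVo, hVc, hVW, hy, hxV, hVd⟩⟩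
  have hP : ∃ (M : ℕ) (P : ℕ → X), P 0 = p ∧ (∀ j, M ≤ j → P j = q) ∧ ∀ j, R (P j) (P (j+1)) := by
    clear hp
    induction hR using Relation.ReflTransGen.head_induction_on with
    | refl =>
      obtain ⟨V, hVo, hVc, hVW, hxV, hVd⟩ := hloc q hq
      exact ⟨0, fun _ => q, rfl, fun _ _ => rfl, fun _ => ⟨V, hVo, hVc, hVW, hxV, hxV, hVd⟩⟩
    | head h _ ih =>
      rename_i a _ _
      obtain ⟨M, P, h0, hM, hj⟩ := ih
      refine ⟨M+1, fun n => Nat.casesOn n a P, rfl, ?_, ?_⟩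
      · rintro (_ | j) hj
        · omega
        · exact hM j (by omega)
      · rintro (_ | j)
        · simpa [h0] using h
        · exact hj j
  obtain ⟨M, P, h0, hM, hj⟩ := hP
  choose V hV using hj
  exact ⟨M, P, V, h0, hM, hV⟩

/-- A finite chain of open connected subsets of `W` from `p` to `q`. -/
structure ChainSt {X : Type*} [MetricSpace X] (W : Set X) (p q : X) where
  N : ℕ
  P : ℕ → X
  V : ℕ → Set X
  hN : 0 < N
  h0 : P 0 = p
  h1 : P N = q
  hV : ∀ i, i < N → IsOpen (V i) ∧ IsPreconnected (V i) ∧ V i ⊆ W ∧ P i ∈ V i ∧ P (i+1) ∈ V i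

theorem ChainSt.refine {X : Type*} [MetricSpace X] [LocallyConnectedSpace X] {W : Set X} {p q : X}
    (s : ChainSt W p q) (ε : ℝ) (hε : 0 < ε) :
    ∃ s' : ChainSt W p q, ∃ M : ℕ, 0 < M ∧ s'.N = s.N * M ∧
      ∀ k, k < s'.N → s'.V k ⊆ s.V (k / M) ∧ ∀ x ∈ s'.V k, ∀ y ∈ s'.V k, dist x y < ε := by
  have H : ∀ j, ∃ (M : ℕ) (Q : ℕ → X) (U : ℕ → Set X), Q 0 = s.P j ∧ (j < s.N →
      (∀ i, M ≤ i → Q i = s.P (j+1)) ∧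
      ∀ i, IsOpen (U i) ∧ IsPreconnected (U i) ∧ U i ⊆ s.V j ∧ Q i ∈ U i ∧ Q (i+1) ∈ U i ∧
        ∀ x ∈ U i, ∀ y ∈ U i, dist x y < ε) := by
    intro j
    by_cases hj : j < s.N
    · obtain ⟨ho, hc, -, hp, hq⟩ := s.hV j hj
      obtain ⟨M, Q, U, h0, h1, h2⟩ := exists_small_chain (s.V j) ho hc ε hε _ _ hp hq
      exact ⟨M, Q, U, h0, fun _ => ⟨h1, h2⟩⟩
    · exact ⟨0, fun _ => s.P j, fun _ => ∅, rfl, fun h => absurd h hj⟩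
  choose M Q U hQ0 hQ using H
  let L := (Finset.range s.N).sup M + 1
  have hL : 0 < L := Nat.succ_pos _
  have hML : ∀ j, j < s.N → M j ≤ L := fun j hj =>
    (Finset.le_sup (f := M) (Finset.mem_range.2 hj)).trans (Nat.le_succ _)
  have hdiv : ∀ k, k < s.N * L → k / L < s.N := fun k hk => by
    rwa [Nat.div_lt_iff_lt_mul hL]
  have hsucc : ∀ k, k < s.N * L → Q ((k+1)/L) ((k+1)%L) = Q (k/L) (k%L+1) := by
    intro k hk
    have hm := Nat.mod_lt k hL
    have hk' := Nat.div_add_mod k L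
    rcases Nat.lt_or_ge (k % L + 1) L with h | h
    · have e1 : (k+1)/L = k/L := by
        rw [Nat.div_eq_iff hL]
        rw [Nat.mul_comm] at hk'
        constructor
        · omega
        · omega
      have e2 : (k+1)%L = k%L+1 := by
        have h3 := Nat.div_add_mod (k+1) L
        rw [e1] at h3
        omega
      rw [e1, e2]
    · have e0 : k + 1 = L * (k/L + 1) := by rw [Nat.mul_add]; omega
      have e1 : (k+1)/L = k/L + 1 := by rw [e0, Nat.mul_div_cancel_left _ hL]
      have e2 : (k+1)%L = 0 := by rw [e0, Nat.mul_mod_right]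
      rw [e1, e2, hQ0, ((hQ _ (hdiv k hk)).1 _ ((hML _ (hdiv k hk)).trans h))]
  refine ⟨⟨s.N * L, fun k => Q (k/L) (k%L), fun k => U (k/L) (k%L), Nat.mul_pos s.hN hL, ?_, ?_, ?_⟩,
    L, hL, rfl, ?_⟩
  · simp [hQ0, s.h0]
  · simp only [Nat.mul_mod_left, Nat.mul_div_cancel _ hL, hQ0, s.h1]
  · intro k hk
    obtain ⟨a1, a2, a3, a4, a5, a6⟩ := (hQ _ (hdiv k hk)).2 (k % L)
    refine ⟨a1, a2, a3.trans (s.hV _ (hdiv k hk)).2.2.1, a4, ?_⟩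
    rw [hsucc k hk]
    exact a5
  · intro k hk
    obtain ⟨a1, a2, a3, a4, a5, a6⟩ := (hQ _ (hdiv k hk)).2 (k % L)
    exact ⟨a3, a6⟩

open Filter in
theorem joinedIn_closure {X : Type*} [MetricSpace X] [CompleteSpace X] [LocallyConnectedSpace X]
    (W : Set X) (hW : IsOpen W) (hWc : IsPreconnected W) (p q : X) (hp : p ∈ W) (hq : q ∈ W) :
    JoinedIn (closure W) p q := by
  let s0 : ChainSt W p q := ⟨1, fun n => if n = 0 then p else q, fun _ => W, one_pos, by simp,
    by simp, fun i hi => by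
      obtain rfl : i = 0 := by omega
      simp [hW, hWc, hp, hq]⟩
  choose nxt M hM hN hV using fun (s : ChainSt W p q) (n : ℕ) =>
    s.refine ((1:ℝ) / 2 / 2 ^ n) (by positivity)
  let S : ℕ → ChainSt W p q := fun n => Nat.rec (nxt s0 0) (fun n s => nxt s (n+1)) n
  have hS : ∀ n, S (n+1) = nxt (S n) (n+1) := fun n => rfl
  have hsm : ∀ n k, k < (S n).N → ∀ x ∈ (S n).V k, ∀ y ∈ (S n).V k, dist x y < 1 / 2 / 2 ^ n := by
    intro n
    cases n with
    | zero => exact fun k hk => (hV s0 0 k hk).2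
    | succ n => exact fun k hk => (hV (S n) (n+1) k hk).2
  let I : ℕ → ℝ → ℕ := fun n t => ⌊t * (S n).N⌋₊
  let g : ℕ → ℝ → X := fun n t => (S n).P (I n t)
  have Ilt : ∀ n t, 0 ≤ t → t < 1 → I n t < (S n).N := by
    intro n t h0 h1
    have : (0:ℝ) < (S n).N := by exact_mod_cast (S n).hN
    rw [Nat.floor_lt (by positivity)]
    nlinarith
  have g0 : ∀ n, g n 0 = p := by intro n; simp [g, I, (S n).h0]
  have g1 : ∀ n, g n 1 = q := by intro n; simp [g, I, (S n).h1]
  have gW : ∀ n t, 0 ≤ t → t ≤ 1 → g n t ∈ W := by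
    intro n t h0 h1
    rcases h1.eq_or_lt with rfl | h1
    · rw [g1]; exact hq
    · have := (S n).hV _ (Ilt n t h0 h1)
      exact this.2.2.1 this.2.2.2.1
  have gstep : ∀ n t, 0 ≤ t → t ≤ 1 → dist (g n t) (g (n+1) t) ≤ 1 / 2 / 2 ^ n := by
    intro n t h0 h1
    rcases h1.eq_or_lt with rfl | h1
    · rw [g1 n, g1 (n+1), dist_self]; positivity
    have hI : I (n+1) t / M (S n) (n+1) = I n t := by
      simp only [I, hS, hN]
      push_cast
      rw [← mul_assoc, Nat.mul_cast_floor_div_cancel (hM _ _).ne']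
    have hk := Ilt (n+1) t h0 h1
    have h2 := (hV (S n) (n+1) _ hk).1
    rw [hI] at h2
    exact (hsm n _ (Ilt n t h0 h1) _ ((S n).hV _ (Ilt n t h0 h1)).2.2.2.1 _
      (h2 ((S (n+1)).hV _ hk).2.2.2.1)).le
  have gosc : ∀ n (s t : ℝ), 0 ≤ s → s ≤ t → t ≤ 1 → t - s < 1 / (S n).N →
      dist (g n s) (g n t) ≤ 1 / 2 / 2 ^ n := by
    intro n s t h0 hst h1 hlt
    have hNpos : (0:ℝ) < (S n).N := by exact_mod_cast (S n).hN
    have i1 : I n s ≤ I n t := Nat.floor_mono (by nlinarith)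
    have i2 : I n t ≤ I n s + 1 := by
      have h3 : t * (S n).N < s * (S n).N + 1 := by
        rw [lt_div_iff₀ hNpos] at hlt
        linarith
      have h4 := Nat.floor_mono h3.le
      rwa [Nat.floor_add_one (by positivity)] at h4
    rcases i1.eq_or_lt with h | h
    · simp only [g, h, dist_self]; positivity
    have h2 : I n t = I n s + 1 := by omega
    have hs1 : s < 1 := by
      by_contra hcon
      have : s = t := by linarith
      rw [this] at h
      exact lt_irrefl _ h
    have hk := Ilt n s h0 hs1
    have h5 := ((S n).hV _ hk).2.2.2
    simp only [g, h2]
    exact (hsm n _ hk _ h5.1 _ h5.2).le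
  have hlim : ∀ t : unitInterval, ∃ x, Tendsto (fun n => g n t) atTop (𝓝 x) := fun t =>
    cauchySeq_tendsto_of_complete
      (cauchySeq_of_le_geometric_two (C := 1) fun n => gstep n t t.2.1 t.2.2)
  choose f hf using hlim
  have hfd : ∀ n (t : unitInterval), dist (g n t) (f t) ≤ 1 / 2 ^ n := fun n t =>
    dist_le_of_le_geometric_two_of_tendsto (C := 1) (fun n => gstep n t t.2.1 t.2.2) (hf t) n
  have hfc : Continuous f := by
    rw [Metric.continuous_iff]
    intro b ε hε
    obtain ⟨n, hn⟩ := exists_pow_lt_of_lt_one (show (0:ℝ) < ε / 3 by linarith)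
      (show (1/2:ℝ) < 1 by norm_num)
    rw [one_div, inv_pow, ← one_div] at hn
    have hNpos : (0:ℝ) < (S n).N := by exact_mod_cast (S n).hN
    refine ⟨1 / (S n).N, by positivity, fun a ha => ?_⟩
    have main : dist (g n a) (g n b) ≤ 1 / 2 / 2 ^ n := by
      rw [Subtype.dist_eq, Real.dist_eq, abs_lt] at ha
      rcases le_total (a:ℝ) b with h | h
      · exact gosc n a b a.2.1 h b.2.2 (by linarith)
      · rw [dist_comm]
        exact gosc n b a b.2.1 h a.2.2 (by linarith)
    have e : (1:ℝ) / 2 / 2 ^ n = (1 / 2 ^ n) / 2 := by ring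
    have e' : (0:ℝ) < 1 / 2 ^ n := by positivity
    have t1 := dist_triangle4 (f a) (g n a) (g n b) (f b)
    have t2 := hfd n a
    have t3 := hfd n b
    rw [dist_comm] at t2
    linarith
  refine ⟨⟨⟨f, hfc⟩, ?_, ?_⟩, fun t => ?_⟩
  · refine tendsto_nhds_unique (hf 0) ?_
    simp [g0]
  · refine tendsto_nhds_unique (hf 1) ?_
    simp [g1]
  · exact mem_closure_of_tendsto (hf t) (Eventually.of_forall fun n => gW n t t.2.1 t.2.2)

theorem locallyPathConnected_of_complete {X : Type*} [MetricSpace X] [CompleteSpace X]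
    [LocallyConnectedSpace X] : LocallyPathConnectedSpace X := by
  rw [locallyPathConnectedSpace_iff_pathComponentIn_mem_nhds]
  intro x u hu hx
  obtain ⟨K, hK, hKc, hKu⟩ := exists_mem_nhds_isClosed_subset (hu.mem_nhds hx)
  obtain ⟨V, hV, hVo, hxV, hVc⟩ := locallyConnectedSpace_iff_subsets_isOpen_isConnected.1
    inferInstance x K hK
  filter_upwards [hVo.mem_nhds hxV] with y hy
  exact (joinedIn_closure V hVo hVc.isPreconnected x y hxV hy).mono
    ((closure_minimal hV hKc).trans hKu)

/-- In a compact, connected, locally connected metric space, every connected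
component of the complement of a point is open and arcwise connected. -/
theorem component_of_punctured_space_arcwise_connected {X : Type*} [MetricSpace X]
    [CompactSpace X] [ConnectedSpace X] [LocallyConnectedSpace X] (x : X) (C : Set X)
    (hC : ∃ y, y ∈ ({x}ᶜ : Set X) ∧ C = connectedComponentIn ({x}ᶜ : Set X) y) :
    IsOpen C ∧ ∀ a ∈ C, ∀ b ∈ C, a ≠ b → JoinedByArcIn C a b := by
  obtain ⟨y, hy, rfl⟩ := hC
  have ho : IsOpen (connectedComponentIn ({x}ᶜ : Set X) y) :=
    isOpen_compl_singleton.connectedComponentIn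
  refine ⟨ho, fun a ha b hb hab => ?_⟩
  haveI : LocallyPathConnectedSpace X := locallyPathConnected_of_complete
  have hpc := ho.isConnected_iff_isPathConnected.1 (isConnected_connectedComponentIn_iff.2 hy)
  obtain ⟨p, hp⟩ := hpc.joinedIn a ha b hb
  obtain ⟨g, hg, hm, h0, h1, hr⟩ := exists_monotone_path p.extend p.continuous_extend
  rw [Path.extend_zero] at h0
  rw [Path.extend_one] at h1
  obtain ⟨γ, hc, hi, e0, e1, hγ⟩ := arc_of_monotone g hg hm (by rw [h0, h1]; exact hab)
  refine ⟨γ, hc, hi, e0.trans h0, e1.trans h1, hγ.trans (hr.trans ?_)⟩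
  rw [Path.extend_range]
  rintro _ ⟨t, rfl⟩
  exact hp t
end

section
/- Let f : ℂ → ℂ be the evaluation map of a polynomial of degree d ≥ 2. Then the filled Julia set K_f is full, i.e., its complement ℂ ∖ K_f is a connected subset of ℂ. -/
open Function Set Topology

/-- The filled Julia set of `f`: points with bounded forward orbit. -/
def filledJulia (f : ℂ → ℂ) : Set ℂ :=
  {z : ℂ | Bornology.IsBounded (Set.range fun n => f^[n] z)}

/-- The exterior of a disk is preconnected (image of a half plane under `exp`). -/
theorem exterior_preconn (R : ℝ) (hR : 0 < R) : IsPreconnected {z : ℂ | R < ‖z‖} := by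
  have h1 : IsPreconnected {w : ℂ | Real.log R < w.re} :=
    (convex_halfSpace_re_gt (Real.log R)).isPreconnected
  have h2 := h1.image Complex.exp Complex.continuous_exp.continuousOn
  convert h2 using 1
  ext z
  constructor
  · intro hz
    have hz' : R < ‖z‖ := hz
    have hz0 : z ≠ 0 := norm_pos_iff.mp (hR.trans hz')
    refine ⟨Complex.log z, ?_, Complex.exp_log hz0⟩
    show Real.log R < (Complex.log z).re
    rw [Complex.log_re]
    exact Real.log_lt_log hR hz'
  · rintro ⟨w, hw, rfl⟩
    show R < ‖Complex.exp w‖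
    rw [Complex.norm_exp]
    exact (Real.log_lt_iff_lt_exp hR).mp hw

/-- Escape radius. -/
theorem escape_radius (p : Polynomial ℂ) (hd : 2 ≤ p.natDegree) :
    ∃ R : ℝ, 0 < R ∧ ∀ z : ℂ, R ≤ ‖z‖ → 2 * ‖z‖ ≤ ‖p.eval z‖ := by
  have hq : 0 < p.divX.degree := by
    rw [← Polynomial.natDegree_pos_iff_degree_pos,
      Polynomial.natDegree_divX_eq_natDegree_tsub_one]
    omega
  have ht := p.divX.tendsto_norm_atTop hq (z := fun z : ℂ => z) tendsto_norm_cobounded_atTop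
  have he := ht.eventually_ge_atTop 3
  obtain ⟨r, -, hr⟩ := (Filter.hasBasis_cobounded_norm.eventually_iff).mp he
  refine ⟨max (max r 1) ‖p.coeff 0‖, by positivity, fun z hz => ?_⟩
  have h1 : r ≤ ‖z‖ := ((le_max_left _ _).trans (le_max_left _ _)).trans hz
  have h2 : ‖p.coeff 0‖ ≤ ‖z‖ := (le_max_right _ _).trans hz
  have h3 : 3 ≤ ‖p.divX.eval z‖ := hr h1
  have h4 : p.eval z = p.divX.eval z * z + p.coeff 0 := by
    conv_lhs => rw [← p.divX_mul_X_add]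
    simp
  have h5 : ‖p.divX.eval z * z‖ ≤ ‖p.eval z‖ + ‖p.coeff 0‖ := by
    have : p.divX.eval z * z = p.eval z - p.coeff 0 := by rw [h4]; ring
    rw [this]
    exact norm_sub_le _ _
  rw [norm_mul] at h5
  nlinarith [norm_nonneg z]

/-- The filled Julia set is full: its complement is connected. -/
theorem filledJulia_compl_connected (p : Polynomial ℂ) (d : ℕ) (hd : 2 ≤ d)
    (hdeg : p.natDegree = d) (f : ℂ → ℂ) (hf : ∀ z, f z = p.eval z) :
    IsConnected ((filledJulia f)ᶜ) := by
  obtain ⟨R, hR, hesc⟩ := escape_radius p (hdeg ▸ hd)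
  have hfd : Differentiable ℂ f := by
    rw [show f = fun z => p.eval z from funext hf]
    exact p.differentiable
  have hfn : ∀ n, Differentiable ℂ (f^[n]) := fun n => hfd.iterate n
  have hgrow : ∀ z : ℂ, R < ‖z‖ → ∀ n : ℕ, 2 ^ n * ‖z‖ ≤ ‖f^[n] z‖ := by
    intro z hz n
    induction n with
    | zero => simp
    | succ n ih =>
      rw [Function.iterate_succ_apply', hf]
      have h1 : (1 : ℝ) ≤ 2 ^ n := one_le_pow₀ (by norm_num)
      have h2 : R ≤ ‖f^[n] z‖ := by nlinarith
      have := hesc _ h2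
      rw [pow_succ]
      linarith
  have hK : ∀ z, z ∈ filledJulia f ↔ ∀ n, ‖f^[n] z‖ ≤ R := by
    intro z
    show Bornology.IsBounded (Set.range fun n => f^[n] z) ↔ _
    constructor
    · intro hz n
      by_contra! hn
      obtain ⟨C, hC⟩ := isBounded_iff_forall_norm_le.mp hz
      obtain ⟨m, hm⟩ := pow_unbounded_of_one_lt (C / R) (by norm_num : (1 : ℝ) < 2)
      have h1 := hgrow _ hn m
      rw [← Function.iterate_add_apply] at h1
      have h2 := hC _ ⟨m + n, rfl⟩
      rw [div_lt_iff₀ hR] at hm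
      have h3 : (0 : ℝ) < 2 ^ m := by positivity
      simp only at h2
      nlinarith
    · intro h
      refine isBounded_iff_forall_norm_le.mpr ⟨R, ?_⟩
      rintro _ ⟨n, rfl⟩
      exact h n
  have hclosed : IsClosed (filledJulia f) := by
    have : filledJulia f = ⋂ n, {z | ‖f^[n] z‖ ≤ R} := by
      ext z; simp [hK]
    rw [this]
    exact isClosed_iInter fun n => isClosed_le (hfn n).continuous.norm continuous_const
  have hopen := hclosed.isOpen_compl
  have hE : {z : ℂ | R < ‖z‖} ⊆ (filledJulia f)ᶜ := by
    intro z hz hzK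
    exact absurd ((hK z).mp hzK 0) (not_le.mpr hz)
  have hx0 : ((R + 1 : ℝ) : ℂ) ∈ {z : ℂ | R < ‖z‖} := by
    show R < ‖((R + 1 : ℝ) : ℂ)‖
    rw [Complex.norm_real, Real.norm_of_nonneg (by linarith)]
    linarith
  refine ⟨⟨_, hE hx0⟩, isPreconnected_of_forall ((R + 1 : ℝ) : ℂ) fun z hz => ?_⟩
  set U := connectedComponentIn (filledJulia f)ᶜ z with hU
  have hzU : z ∈ U := mem_connectedComponentIn hz
  have hmeet : ∃ w ∈ U, R < ‖w‖ := by
    by_contra! hno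
    apply hz
    rw [hK]
    intro n
    have hb : Bornology.IsBounded U := isBounded_iff_forall_norm_le.mpr ⟨R, hno⟩
    refine Complex.norm_le_of_forall_mem_frontier_norm_le hb (hfn n).diffContOnCl ?_
      (subset_closure hzU)
    intro w hw
    refine (hK w).mp ?_ n
    by_contra hwK
    have hUo : IsOpen U := hopen.connectedComponentIn
    rw [hUo.frontier_eq] at hw
    obtain ⟨v, hv1, hv2⟩ := mem_closure_iff.mp hw.1 (connectedComponentIn (filledJulia f)ᶜ w)
      hopen.connectedComponentIn (mem_connectedComponentIn hwK)
    apply hw.2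
    rw [hU, connectedComponentIn_eq hv2, ← connectedComponentIn_eq hv1]
    exact mem_connectedComponentIn hwK
  obtain ⟨w, hwU, hwR⟩ := hmeet
  exact ⟨U ∪ {z : ℂ | R < ‖z‖}, union_subset (connectedComponentIn_subset _ _) hE,
    Or.inr hx0, Or.inl hzU,
    IsPreconnected.union w hwU hwR isPreconnected_connectedComponentIn (exterior_preconn R hR)⟩
end
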